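/- Let ν be a shift-invariant ergodic probability measure on {0,1}^ℕ with ν ∉ {δ_{0^∞}, δ_{1^∞}}, and set V_ν = Σ_{i≥1} F_i/2^i with F_i = ν({X : X_0 ≠ X_i}). For X ∈ {0,1}^ℕ let a_X(n) = Σ_{k=0}^n X_k 2^k. Then for ν-almost every X, the rescaled measures μ̃_{X,n} defined by μ̃_{X,n}(A) = μ_{a_X(n)}(√(V_ν n)·A) converge weakly, as n → ∞, to the standard Gaussian N(0,1). -/

import Mathlib

open Filter MeasureTheory

/-- Binary sum-of-digits function. -/
def s2 (n : ℕ) : ℕ := (Nat.digits 2 n).sum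

/-- `hasDensity a d x` means `{n : s₂(n+a) - s₂(n) = d}` has asymptotic density `x`. -/
def hasDensity (a : ℕ) (d : ℤ) (x : ℝ) : Prop :=
  Tendsto (fun N : ℕ =>
      (((Finset.range N).filter (fun n => (s2 (n + a) : ℤ) - s2 n = d)).card : ℝ) / N)
    atTop (nhds x)

/-- The left shift on `{0,1}^ℕ`. -/
def shift (X : ℕ → Bool) : ℕ → Bool := fun n => X (n + 1)

/-- The integer whose binary digits are the prefix of length `n+1` of `X`. -/
def aX (X : ℕ → Bool) (n : ℕ) : ℕ :=
  ∑ k ∈ Finset.range (n + 1), (if X k then 2 ^ k else 0)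

/-- The standard Gaussian density. -/
noncomputable def stdGaussian (t : ℝ) : ℝ :=
  Real.exp (-t ^ 2 / 2) / Real.sqrt (2 * Real.pi)


lemma s2_even (m : ℕ) : s2 (2 * m) = s2 m := by
  unfold s2
  rcases Nat.eq_zero_or_pos m with rfl | h
  · simp
  · rw [Nat.digits_def' (by norm_num) (by omega)]
    simp

lemma s2_odd (m : ℕ) : s2 (2 * m + 1) = s2 m + 1 := by
  unfold s2
  rw [Nat.digits_def' (by norm_num) (by omega)]
  have h1 : (2 * m + 1) % 2 = 1 := by omega
  have h2 : (2 * m + 1) / 2 = m := by omega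
  rw [h1, h2]
  simp [add_comm]

/-- counting function -/
def cnt (a : ℕ) (d : ℤ) (N : ℕ) : ℕ :=
  ((Finset.range N).filter (fun n => (s2 (n + a) : ℤ) - s2 n = d)).card

lemma cnt_succ (a : ℕ) (d : ℤ) (N : ℕ) :
    cnt a d (N + 1) = cnt a d N + if (s2 (N + a) : ℤ) - s2 N = d then 1 else 0 := by
  unfold cnt
  rw [Finset.card_filter, Finset.card_filter, Finset.sum_range_succ]

lemma cnt_even (a : ℕ) (d : ℤ) (N : ℕ) : cnt (2 * a) d (2 * N) = 2 * cnt a d N := by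
  induction N with
  | zero => simp [cnt]
  | succ N ih =>
    rw [show 2 * (N + 1) = 2 * N + 1 + 1 by ring, cnt_succ, cnt_succ, cnt_succ, ih,
      show 2 * N + 2 * a = 2 * (N + a) by ring, show 2 * N + 1 + 2 * a = 2 * (N + a) + 1 by ring,
      s2_even, s2_even, s2_odd, s2_odd]
    push_cast
    rw [show ((s2 (N + a) : ℤ) + 1 - (s2 N + 1)) = s2 (N + a) - s2 N by ring]
    ring

lemma cnt_odd (a : ℕ) (d : ℤ) (N : ℕ) :
    cnt (2 * a + 1) d (2 * N) = cnt a (d - 1) N + cnt (a + 1) (d + 1) N := by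
  induction N with
  | zero => simp [cnt]
  | succ N ih =>
    rw [show 2 * (N + 1) = 2 * N + 1 + 1 by ring, cnt_succ, cnt_succ, cnt_succ, cnt_succ, ih,
      show 2 * N + (2 * a + 1) = 2 * (N + a) + 1 by ring,
      show 2 * N + 1 + (2 * a + 1) = 2 * (N + (a + 1)) by ring,
      s2_even, s2_even, s2_odd, s2_odd]
    push_cast
    have e1 : ((s2 (N + a) : ℤ) + 1 - s2 N = d) ↔ ((s2 (N + a) : ℤ) - s2 N = d - 1) := by
      constructor <;> intro h <;> linarith
    have e2 : ((s2 (N + (a + 1)) : ℤ) - (s2 N + 1) = d) ↔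
        ((s2 (N + (a + 1)) : ℤ) - s2 N = d + 1) := by
      constructor <;> intro h <;> linarith
    simp only [e1, e2]
    ring


lemma dens_tendsto {μ : ℕ → ℤ → ℝ} (hdens : ∀ a d, hasDensity a d (μ a d))
    (a : ℕ) (d : ℤ) :
    Tendsto (fun N : ℕ => (cnt a d N : ℝ) / N) atTop (nhds (μ a d)) := hdens a d

lemma dens_two {μ : ℕ → ℤ → ℝ} (hdens : ∀ a d, hasDensity a d (μ a d))
    (a : ℕ) (d : ℤ) :
    Tendsto (fun N : ℕ => (cnt a d (2 * N) : ℝ) / (2 * N)) atTop (nhds (μ a d)) := by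
  have h := (dens_tendsto hdens a d).comp (tendsto_id.const_mul_atTop' (r := 2) (by norm_num))
  refine h.congr fun N => ?_
  simp

lemma mu_nonneg {μ : ℕ → ℤ → ℝ} (hdens : ∀ a d, hasDensity a d (μ a d))
    (a : ℕ) (d : ℤ) : 0 ≤ μ a d :=
  ge_of_tendsto' (dens_tendsto hdens a d) fun N => by positivity

lemma mu_even {μ : ℕ → ℤ → ℝ} (hdens : ∀ a d, hasDensity a d (μ a d))
    (a : ℕ) (d : ℤ) : μ (2 * a) d = μ a d := by
  refine tendsto_nhds_unique (dens_two hdens (2 * a) d) ((dens_tendsto hdens a d).congr fun N => ?_)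
  rw [cnt_even]
  push_cast
  rw [mul_div_mul_left _ _ (by norm_num)]

lemma mu_odd {μ : ℕ → ℤ → ℝ} (hdens : ∀ a d, hasDensity a d (μ a d))
    (a : ℕ) (d : ℤ) :
    μ (2 * a + 1) d = (μ a (d - 1) + μ (a + 1) (d + 1)) / 2 := by
  refine tendsto_nhds_unique (dens_two hdens (2 * a + 1) d)
    ((((dens_tendsto hdens a (d - 1)).add
      (dens_tendsto hdens (a + 1) (d + 1))).div_const 2).congr fun N => ?_)
  rw [cnt_odd]
  push_cast
  rw [← add_div, div_div, mul_comm (N : ℝ) 2]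

lemma mu_zero {μ : ℕ → ℤ → ℝ} (hdens : ∀ a d, hasDensity a d (μ a d))
    (d : ℤ) : μ 0 d = if d = 0 then 1 else 0 := by
  have h := dens_tendsto hdens 0 d
  refine tendsto_nhds_unique h ?_
  refine tendsto_const_nhds.congr' ?_
  filter_upwards [eventually_gt_atTop 0] with N hN
  have hN' : (N : ℝ) ≠ 0 := by positivity
  unfold cnt
  split_ifs with hd
  · subst hd
    simp [hN']
  · have : ((Finset.range N).filter (fun n => (s2 (n + 0) : ℤ) - s2 n = d)) = ∅ := by
      apply Finset.filter_false_of_mem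
      intro n _ h
      simp at h
      exact hd h.symm
    rw [this]
    simp

lemma mu_sum_le {μ : ℕ → ℤ → ℝ} (hdens : ∀ a d, hasDensity a d (μ a d))
    (a : ℕ) (s : Finset ℤ) : ∑ d ∈ s, μ a d ≤ 1 := by
  refine le_of_tendsto' (tendsto_finsetSum s fun d _ => dens_tendsto hdens a d) fun N => ?_
  rw [← Finset.sum_div]
  apply div_le_one_of_le₀ _ (by positivity)
  have h : ∑ d ∈ s, cnt a d N ≤ N := by
    unfold cnt
    have h1 := Finset.card_eq_sum_card_fiberwise (f := fun n => (s2 (n + a) : ℤ) - s2 n)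
      (s := (Finset.range N).filter (fun n => (s2 (n + a) : ℤ) - s2 n ∈ s)) (t := s)
      (by intro x hx; simpa using (Finset.mem_filter.1 hx).2)
    have h2 : ((Finset.range N).filter (fun n => (s2 (n + a) : ℤ) - s2 n ∈ s)).card ≤ N :=
      (Finset.card_filter_le _ _).trans (by simp)
    rw [h1] at h2
    refine le_trans (Finset.sum_le_sum fun d hd => ?_) h2
    apply Finset.card_le_card
    intro n hn
    simp only [Finset.mem_filter] at hn ⊢
    exact ⟨⟨hn.1, hn.2 ▸ hd⟩, hn.2⟩
  exact_mod_cast h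

lemma mu_summable {μ : ℕ → ℤ → ℝ} (hdens : ∀ a d, hasDensity a d (μ a d))
    (a : ℕ) : Summable (μ a) :=
  summable_of_sum_le (mu_nonneg hdens a) (mu_sum_le hdens a)


/-- characteristic function of the correlation measure -/
noncomputable def phi (μ : ℕ → ℤ → ℝ) (θ : ℝ) (a : ℕ) : ℂ :=
  ∑' d : ℤ, Complex.exp (((θ * d : ℝ) : ℂ) * Complex.I) * (μ a d : ℂ)


lemma phi_summable {μ : ℕ → ℤ → ℝ} (hdens : ∀ a d, hasDensity a d (μ a d))
    (θ : ℝ) (a : ℕ) :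
    Summable (fun d : ℤ => Complex.exp (((θ * d : ℝ) : ℂ) * Complex.I) * (μ a d : ℂ)) := by
  refine Summable.of_norm_bounded (mu_summable hdens a) fun d => ?_
  rw [norm_mul, Complex.norm_exp_ofReal_mul_I, one_mul, Complex.norm_real,
    Real.norm_of_nonneg (mu_nonneg hdens a d)]

lemma phi_even {μ : ℕ → ℤ → ℝ} (hdens : ∀ a d, hasDensity a d (μ a d))
    (θ : ℝ) (a : ℕ) : phi μ θ (2 * a) = phi μ θ a := by
  unfold phi
  simp only [mu_even hdens]

lemma phi_odd {μ : ℕ → ℤ → ℝ} (hdens : ∀ a d, hasDensity a d (μ a d))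
    (θ : ℝ) (a : ℕ) : phi μ θ (2 * a + 1) =
    (Complex.exp (θ * Complex.I) * phi μ θ a +
      Complex.exp (-(θ * Complex.I)) * phi μ θ (a + 1)) / 2 := by
  have h1 := ((Equiv.subRight (1 : ℤ)).hasSum_iff.2 (phi_summable hdens θ a).hasSum).mul_left
    (Complex.exp (θ * Complex.I))
  have h2 := ((Equiv.addRight (1 : ℤ)).hasSum_iff.2 (phi_summable hdens θ (a + 1)).hasSum).mul_left
    (Complex.exp (-(θ * Complex.I)))
  have h3 := (h1.add h2).div_const 2
  refine HasSum.tsum_eq (h3.congr_fun ?_)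
  intro d
  simp only [Function.comp, Equiv.subRight_apply, Equiv.coe_addRight, mu_odd hdens]
  rw [← mul_assoc, ← mul_assoc, ← Complex.exp_add, ← Complex.exp_add]
  push_cast
  rw [show (θ * Complex.I + θ * ((d : ℂ) - 1) * Complex.I) = θ * d * Complex.I by ring,
    show (-(θ * Complex.I) + θ * ((d : ℂ) + 1) * Complex.I) = θ * d * Complex.I by ring]
  ring

lemma phi_zero {μ : ℕ → ℤ → ℝ} (hdens : ∀ a d, hasDensity a d (μ a d))
    (θ : ℝ) : phi μ θ 0 = 1 := by
  unfold phi
  rw [tsum_eq_single 0]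
  · simp [mu_zero hdens]
  · intro d hd
    simp [mu_zero hdens, hd]

lemma phi_one {μ : ℕ → ℤ → ℝ} (hdens : ∀ a d, hasDensity a d (μ a d))
    (θ : ℝ) : ‖phi μ θ 1 - 1‖ ≤ θ ^ 2 := by
  have h := phi_odd hdens θ 0
  rw [phi_zero hdens] at h
  simp only [mul_zero, zero_add, mul_one] at h
  set E := Complex.exp (-(θ * Complex.I)) with hE
  set z := phi μ θ 1
  have hn : ‖E‖ = 1 := by
    rw [hE, show -((θ : ℂ) * Complex.I) = ((-θ : ℝ) : ℂ) * Complex.I by push_cast; ring,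
      Complex.norm_exp_ofReal_mul_I]
  have h1 : (z - 1) * (1 - E / 2) = ((Real.cos θ - 1 : ℝ) : ℂ) := by
    push_cast
    rw [Complex.cos, show -(θ : ℂ) * Complex.I = -(θ * Complex.I) by ring, ← hE]
    linear_combination h
  have h2 : (1 / 2 : ℝ) ≤ ‖1 - E / 2‖ := by
    have := norm_sub_norm_le (1 : ℂ) (E / 2)
    rw [norm_div, hn] at this
    norm_num at this ⊢
    linarith
  have h3 : ‖z - 1‖ * ‖1 - E / 2‖ = |Real.cos θ - 1| := by
    rw [← norm_mul, h1, Complex.norm_real, Real.norm_eq_abs]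
  have h4 : |Real.cos θ - 1| ≤ θ ^ 2 / 2 := by
    rw [abs_le]
    constructor
    · linarith [Real.one_sub_sq_div_two_le_cos (x := θ)]
    · linarith [Real.cos_le_one θ, sq_nonneg θ]
  nlinarith [norm_nonneg (z - 1)]

lemma mu_hasSum {μ : ℕ → ℤ → ℝ} (hdens : ∀ a d, hasDensity a d (μ a d))
    (a : ℕ) : HasSum (μ a) 1 := by
  have key : ∀ a, phi μ 0 a = 1 ∧ phi μ 0 (a + 1) = 1 := by
    have h1 : phi μ 0 1 = 1 := by
      have := phi_one hdens 0
      simpa [sub_eq_zero] using this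
    intro a
    induction a using Nat.strong_induction_on with
    | _ a ih =>
      rcases Nat.eq_zero_or_pos a with rfl | ha
      · exact ⟨phi_zero hdens 0, h1⟩
      · obtain ⟨b, rfl | rfl⟩ := Nat.even_or_odd' a
        · obtain ⟨h2, h3⟩ := ih b (by omega)
          refine ⟨by rw [phi_even hdens, h2], ?_⟩
          rw [phi_odd hdens, h2, h3]; simp
        · obtain ⟨h2, h3⟩ := ih b (by omega)
          refine ⟨?_, ?_⟩
          · rw [phi_odd hdens, h2, h3]; simp
          · rw [show 2 * b + 1 + 1 = 2 * (b + 1) by ring, phi_even hdens, h3]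
  have h := (key a).1
  have h5 : ((∑' d, μ a d : ℝ) : ℂ) = 1 := by
    rw [← h, phi, Complex.ofReal_tsum]
    simp
  have h6 : ∑' d, μ a d = 1 := by exact_mod_cast h5
  rw [← h6]
  exact (mu_summable hdens a).hasSum


set_option linter.unusedSectionVars false

section birk
variable {α : Type*} [MeasurableSpace α]

/-- running maximum of Birkhoff sums -/
noncomputable def maxB (T : α → α) (g : α → ℝ) : ℕ → α → ℝ
  | 0, _ => 0
  | n + 1, x => max 0 (g x + maxB T g n (T x))

lemma maxB_nonneg (T : α → α) (g : α → ℝ) (n : ℕ) (x : α) : 0 ≤ maxB T g n x := by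
  cases n with
  | zero => simp [maxB]
  | succ n => simp [maxB]

lemma maxB_mono (T : α → α) (g : α → ℝ) (n : ℕ) (x : α) : maxB T g n x ≤ maxB T g (n + 1) x := by
  induction n generalizing x with
  | zero => simp [maxB]
  | succ n ih =>
    rw [maxB, maxB]
    exact max_le_max le_rfl (by linarith [ih (T x)])

lemma birk_le_maxB (T : α → α) (g : α → ℝ) (n : ℕ) (x : α) :
    birkhoffSum T g n x ≤ maxB T g n x := by
  induction n generalizing x with
  | zero => simp [maxB]
  | succ n ih =>
    rw [maxB, birkhoffSum_succ']
    exact le_max_of_le_right (by linarith [ih (T x)])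

lemma maxB_le (T : α → α) (g : α → ℝ) (C : ℝ) (hC0 : 0 ≤ C) (hC : ∀ x, |g x| ≤ C) (n : ℕ) (x : α) :
    maxB T g n x ≤ n * C := by
  induction n generalizing x with
  | zero => simp [maxB]
  | succ n ih =>
    rw [maxB]
    refine max_le (by positivity) ?_
    push_cast
    linarith [ih (T x), (abs_le.1 (hC x)).2]

lemma maxB_meas (T : α → α) (hT : Measurable T) (g : α → ℝ) (hg : Measurable g) (n : ℕ) :
    Measurable (maxB T g n) := by
  induction n with
  | zero => exact measurable_const
  | succ n ih => exact measurable_const.max (hg.add (ih.comp hT))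

lemma birk_upper (ν : Measure α) [IsProbabilityMeasure ν] (T : α → α) (hT : Ergodic T ν)
    (g : α → ℝ) (hg : Measurable g) (C : ℝ) (hC : ∀ x, |g x| ≤ C) (hneg : ∫ x, g x ∂ν < 0) :
    ∀ᵐ x ∂ν, ∃ K : ℝ, ∀ n, birkhoffSum T g n x ≤ K := by
  have hTm : Measurable T := hT.measurable
  have hC0 : 0 ≤ C := by
    obtain ⟨x⟩ : Nonempty α := ν.nonempty_of_neZero
    exact (abs_nonneg _).trans (hC x)
  have hmono : ∀ x, Monotone (fun n => maxB T g n x) :=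
    fun x => monotone_nat_of_le_succ fun n => maxB_mono T g n x
  set A : Set α := {x | ∀ K : ℕ, ∃ n, (K : ℝ) < maxB T g n x} with hA
  have hAm : MeasurableSet A := by
    have : A = ⋂ K : ℕ, ⋃ n, {x | (K : ℝ) < maxB T g n x} := by
      ext x; simp [hA]
    rw [this]
    exact MeasurableSet.iInter fun K => MeasurableSet.iUnion fun n =>
      measurableSet_lt measurable_const (maxB_meas T hTm g hg n)
  have hinv : T ⁻¹' A = A := by
    ext x
    simp only [hA, Set.mem_preimage, Set.mem_ofPred_eq]
    constructor
    · intro h K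
      obtain ⟨K', hK'⟩ := exists_nat_gt (K + C)
      obtain ⟨n, hn⟩ := h K'
      refine ⟨n + 1, ?_⟩
      rw [maxB]
      refine lt_max_of_lt_right ?_
      linarith [(abs_le.1 (hC x)).1]
    · intro h K
      obtain ⟨K', hK'⟩ := exists_nat_gt (K + C)
      obtain ⟨n, hn⟩ := h K'
      refine ⟨n, ?_⟩
      have h1 := hn.trans_le (maxB_mono T g n x)
      rw [maxB] at h1
      have hK0 : (0 : ℝ) ≤ K := by positivity
      rcases lt_max_iff.1 h1 with h2 | h2
      · linarith
      · linarith [(abs_le.1 (hC x)).2]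
  rcases hT.toPreErgodic.ae_mem_or_ae_notMem hAm hinv with h | h
  · exfalso
    have hint : ∀ n, Integrable (maxB T g n) ν := fun n =>
      Integrable.of_bound (maxB_meas T hTm g hg n).aestronglyMeasurable (n * C)
        (ae_of_all _ fun x => by
          rw [Real.norm_of_nonneg (maxB_nonneg T g n x)]; exact maxB_le T g C hC0 hC n x)
    have hlim : Tendsto (fun n => ∫ x, (maxB T g (n + 1) x - maxB T g n (T x)) ∂ν) atTop
        (nhds (∫ x, g x ∂ν)) := by
      refine tendsto_integral_of_dominated_convergence (fun _ => C) ?_ (integrable_const C) ?_ ?_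
      · exact fun n => ((maxB_meas T hTm g hg (n + 1)).sub
          ((maxB_meas T hTm g hg n).comp hTm)).aestronglyMeasurable
      · refine fun n => ae_of_all _ fun x => ?_
        rw [maxB, Real.norm_eq_abs, abs_le]
        have h1 := abs_le.1 (hC x)
        have h2 := maxB_nonneg T g n (T x)
        constructor
        · linarith [le_max_right 0 (g x + maxB T g n (T x))]
        · have : max 0 (g x + maxB T g n (T x)) ≤ C + maxB T g n (T x) :=
            max_le (by linarith) (by linarith)
          linarith
      · filter_upwards [h] with x hx
        rw [← hinv] at hx
        obtain ⟨K, hK⟩ := exists_nat_gt C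
        obtain ⟨n, hn⟩ := hx K
        refine tendsto_const_nhds.congr' ?_
        filter_upwards [eventually_ge_atTop n] with m hm
        have h1 := hmono (T x) hm
        simp only at h1
        rw [maxB, max_eq_right]
        · ring
        · linarith [(abs_le.1 (hC x)).1]
    have hge : 0 ≤ ∫ x, g x ∂ν := by
      refine ge_of_tendsto' hlim fun n => ?_
      have h1 : Integrable (fun x => maxB T g n (T x)) ν :=
        hT.toMeasurePreserving.integrable_comp_of_integrable (hint n)
      rw [integral_sub (hint (n + 1)) h1]
      have h2 : ∫ x, maxB T g n (T x) ∂ν = ∫ x, maxB T g n x ∂ν := by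
        have h3 := integral_map (μ := ν) (φ := T) hTm.aemeasurable (f := maxB T g n)
          (maxB_meas T hTm g hg n).aestronglyMeasurable
        rw [hT.toMeasurePreserving.map_eq] at h3
        exact h3.symm
      rw [h2, sub_nonneg]
      exact integral_mono (hint n) (hint (n + 1)) fun x => maxB_mono T g n x
    linarith
  · filter_upwards [h] with x hx
    simp only [hA, Set.mem_ofPred_eq, not_forall, not_exists, not_lt] at hx
    obtain ⟨K, hK⟩ := hx
    exact ⟨K, fun n => (birk_le_maxB T g n x).trans (hK n)⟩

lemma birk_sub_const (T : α → α) (g : α → ℝ) (c : ℝ) (n : ℕ) (x : α) :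
    birkhoffSum T (fun y => g y - c) n x = birkhoffSum T g n x - n * c := by
  simp [birkhoffSum, Finset.sum_sub_distrib]

lemma birk_upper' (ν : Measure α) [IsProbabilityMeasure ν] (T : α → α) (hT : Ergodic T ν)
    (g : α → ℝ) (hg : Measurable g) (C : ℝ) (hC : ∀ x, |g x| ≤ C) :
    ∀ᵐ x ∂ν, ∀ ε > 0, ∀ᶠ n : ℕ in atTop, birkhoffSum T g n x / n < ∫ x, g x ∂ν + ε := by
  have h : ∀ k : ℕ, ∀ᵐ x ∂ν, ∃ K : ℝ, ∀ n,
      birkhoffSum T (fun y => g y - (∫ x, g x ∂ν + 1 / ((k : ℝ) + 1))) n x ≤ K := by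
    intro k
    refine birk_upper ν T hT _ (hg.sub measurable_const)
      (C + |∫ x, g x ∂ν + 1 / ((k : ℝ) + 1)|) ?_ ?_
    · intro x
      exact (abs_sub _ _).trans (by linarith [hC x])
    · rw [integral_sub _ (integrable_const _)]
      · simp
        positivity
      · exact Integrable.of_bound hg.aestronglyMeasurable C (ae_of_all _ hC)
  filter_upwards [ae_all_iff.2 h] with x hx ε hε
  obtain ⟨k, hk⟩ := exists_nat_one_div_lt (half_pos hε)
  obtain ⟨K, hK⟩ := hx k
  obtain ⟨N, hN⟩ := exists_nat_gt (K / (ε / 2))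
  filter_upwards [eventually_gt_atTop N, eventually_gt_atTop 0] with n hn hn0
  have hn0' : (0 : ℝ) < n := by exact_mod_cast hn0
  have hn' : (N : ℝ) < n := by exact_mod_cast hn
  rw [div_lt_iff₀ hn0']
  have h1 := hK n
  rw [birk_sub_const] at h1
  have h2 : K < n * (ε / 2) := by
    rw [div_lt_iff₀ (half_pos hε)] at hN
    nlinarith
  nlinarith

/-- Birkhoff's pointwise ergodic theorem, bounded ergodic case. -/
lemma birk (ν : Measure α) [IsProbabilityMeasure ν] (T : α → α) (hT : Ergodic T ν)
    (g : α → ℝ) (hg : Measurable g) (C : ℝ) (hC : ∀ x, |g x| ≤ C) :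
    ∀ᵐ x ∂ν, Tendsto (fun n : ℕ => birkhoffSum T g n x / n) atTop (nhds (∫ x, g x ∂ν)) := by
  filter_upwards [birk_upper' ν T hT g hg C hC,
    birk_upper' ν T hT (fun x => - g x) hg.neg C (by simpa using hC)] with x h1 h2
  rw [Metric.tendsto_nhds]
  intro ε hε
  filter_upwards [h1 ε hε, h2 ε hε] with n h3 h4
  have h5 : birkhoffSum T (fun x => - g x) n x = - birkhoffSum T g n x := by
    simp [birkhoffSum]
  rw [h5, integral_neg, neg_div] at h4
  rw [Real.dist_eq, abs_lt]
  constructor <;> linarith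

end birk

lemma local_est (θ q0 q1 : ℝ) (hθ : |θ| ≤ 1 / 2) (h0 : 0 ≤ q0) (h1 : 0 ≤ q1)
    (hd : |q1 - q0| ≤ 2) :
    ‖(Complex.exp (θ * Complex.I) * (Real.exp (-(θ ^ 2 * q0 / 2)) : ℂ) +
      Complex.exp (-(θ * Complex.I)) * (Real.exp (-(θ ^ 2 * q1 / 2)) : ℂ)) / 2 -
      (Real.exp (-(θ ^ 2 * (1 + (q0 + q1) / 2) / 2)) : ℂ)‖ ≤ 5 * |θ| ^ 3 := by
  set m := (q0 + q1) / 2 with hm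
  set δ := (q1 - q0) / 2 with hδ
  have hδ1 : |δ| ≤ 1 := by
    rw [hδ, abs_div, abs_two]; linarith
  set z : ℂ := θ * Complex.I + ((θ ^ 2 * δ / 2 : ℝ) : ℂ) with hz
  have e : (Complex.exp (θ * Complex.I) * (Real.exp (-(θ ^ 2 * q0 / 2)) : ℂ) +
      Complex.exp (-(θ * Complex.I)) * (Real.exp (-(θ ^ 2 * q1 / 2)) : ℂ)) / 2 -
      (Real.exp (-(θ ^ 2 * (1 + m) / 2)) : ℂ) =
      (Real.exp (-(θ ^ 2 * m / 2)) : ℂ) *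
        ((Complex.exp z + Complex.exp (-z)) / 2 - (Real.exp (-(θ ^ 2 / 2)) : ℂ)) := by
    have a0 : Complex.exp (θ * Complex.I) * (Real.exp (-(θ ^ 2 * q0 / 2)) : ℂ) =
        (Real.exp (-(θ ^ 2 * m / 2)) : ℂ) * Complex.exp z := by
      rw [Complex.ofReal_exp, Complex.ofReal_exp, ← Complex.exp_add, ← Complex.exp_add]
      congr 1
      rw [hz, hm, hδ]; push_cast; ring
    have a1 : Complex.exp (-(θ * Complex.I)) * (Real.exp (-(θ ^ 2 * q1 / 2)) : ℂ) =
        (Real.exp (-(θ ^ 2 * m / 2)) : ℂ) * Complex.exp (-z) := by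
      rw [Complex.ofReal_exp, Complex.ofReal_exp, ← Complex.exp_add, ← Complex.exp_add]
      congr 1
      rw [hz, hm, hδ]; push_cast; ring
    have a2 : (Real.exp (-(θ ^ 2 * (1 + m) / 2)) : ℂ) =
        (Real.exp (-(θ ^ 2 * m / 2)) : ℂ) * (Real.exp (-(θ ^ 2 / 2)) : ℂ) := by
      rw [← Complex.ofReal_mul, ← Real.exp_add]
      congr 2
      ring
    rw [a0, a1, a2]; ring
  rw [e, norm_mul]
  have hmn : 0 ≤ m := by rw [hm]; linarith
  have n1 : ‖(Real.exp (-(θ ^ 2 * m / 2)) : ℂ)‖ ≤ 1 := by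
    rw [Complex.norm_real, Real.norm_of_nonneg (Real.exp_pos _).le, Real.exp_le_one_iff]
    have : 0 ≤ θ ^ 2 * m / 2 := by positivity
    linarith
  have hsq : θ ^ 2 = |θ| ^ 2 := (sq_abs θ).symm
  have ht0 : 0 ≤ |θ| := abs_nonneg θ
  have nr : ‖((θ ^ 2 * δ / 2 : ℝ) : ℂ)‖ ≤ |θ| ^ 2 / 2 := by
    rw [Complex.norm_real, Real.norm_eq_abs, abs_div, abs_mul, abs_pow, abs_two]
    have : |θ| ^ 2 * |δ| ≤ |θ| ^ 2 * 1 := by gcongr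
    linarith
  have nz : ‖z‖ ≤ 3 / 2 * |θ| := by
    have h2 : ‖z‖ ≤ ‖(θ : ℂ) * Complex.I‖ + ‖((θ ^ 2 * δ / 2 : ℝ) : ℂ)‖ := norm_add_le _ _
    rw [norm_mul, Complex.norm_I, Complex.norm_real, Real.norm_eq_abs] at h2
    nlinarith
  have nz1 : ‖z‖ ≤ 1 := by linarith
  have taylor : ∀ w : ℂ, ‖w‖ ≤ 1 → ‖Complex.exp w - (1 + w + w ^ 2 / 2)‖ ≤ ‖w‖ ^ 3 := by
    intro w hw
    have h2 := Complex.exp_bound hw (n := 3) (by norm_num)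
    simp only [Finset.sum_range_succ, Finset.sum_range_zero, Nat.factorial] at h2
    norm_num at h2
    have h3 : 0 ≤ ‖w‖ ^ 3 := by positivity
    linarith
  have t1 := taylor z nz1
  have t2 := taylor (-z) (by rwa [norm_neg])
  rw [norm_neg] at t2
  have t3 : |Real.exp (-(θ ^ 2 / 2)) - 1 - (-(θ ^ 2 / 2))| ≤ (-(θ ^ 2 / 2)) ^ 2 := by
    apply Real.abs_exp_sub_one_sub_id_le
    rw [abs_neg, abs_of_nonneg (by positivity)]
    nlinarith
  have e2 : (Complex.exp z + Complex.exp (-z)) / 2 - (Real.exp (-(θ ^ 2 / 2)) : ℂ) =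
      (Complex.exp z - (1 + z + z ^ 2 / 2)) / 2 +
      (Complex.exp (-z) - (1 + -z + (-z) ^ 2 / 2)) / 2 +
      (θ * Complex.I) * ((θ ^ 2 * δ / 2 : ℝ) : ℂ) +
      ((θ ^ 2 * δ / 2 : ℝ) : ℂ) ^ 2 / 2
      - ((Real.exp (-(θ ^ 2 / 2)) - 1 - (-(θ ^ 2 / 2)) : ℝ) : ℂ) := by
    rw [hz]
    push_cast
    ring_nf
    simp only [Complex.I_sq]
    ring
  have z3 : ‖z‖ ^ 3 ≤ (3 / 2 * |θ|) ^ 3 := by gcongr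
  have b1 : ‖(Complex.exp z - (1 + z + z ^ 2 / 2)) / 2‖ ≤ (3 / 2 * |θ|) ^ 3 / 2 := by
    rw [norm_div, Complex.norm_ofNat]; linarith
  have b2 : ‖(Complex.exp (-z) - (1 + -z + (-z) ^ 2 / 2)) / 2‖ ≤ (3 / 2 * |θ|) ^ 3 / 2 := by
    rw [norm_div, Complex.norm_ofNat]; linarith
  have b3 : ‖((θ : ℂ) * Complex.I) * ((θ ^ 2 * δ / 2 : ℝ) : ℂ)‖ ≤ |θ| * (|θ| ^ 2 / 2) := by
    rw [norm_mul, norm_mul, Complex.norm_I, Complex.norm_real θ, Real.norm_eq_abs, mul_one]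
    gcongr
  have b4 : ‖((θ ^ 2 * δ / 2 : ℝ) : ℂ) ^ 2 / 2‖ ≤ (|θ| ^ 2 / 2) ^ 2 / 2 := by
    rw [norm_div, norm_pow, Complex.norm_ofNat]
    gcongr
  have b5 : ‖((Real.exp (-(θ ^ 2 / 2)) - 1 - (-(θ ^ 2 / 2)) : ℝ) : ℂ)‖ ≤ (|θ| ^ 2 / 2) ^ 2 := by
    rw [Complex.norm_real, Real.norm_eq_abs]
    rw [← hsq]; linarith
  have tot : ‖(Complex.exp z + Complex.exp (-z)) / 2 - (Real.exp (-(θ ^ 2 / 2)) : ℂ)‖ ≤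
      5 * |θ| ^ 3 := by
    rw [e2]
    refine (norm_sub_le _ _).trans ?_
    refine (add_le_add (norm_add_le _ _) le_rfl).trans ?_
    refine (add_le_add (add_le_add (norm_add_le _ _) le_rfl) le_rfl).trans ?_
    refine (add_le_add (add_le_add (add_le_add (norm_add_le _ _) le_rfl) le_rfl) le_rfl).trans ?_
    have h4 : |θ| ^ 4 ≤ |θ| ^ 3 * (1 / 2) := by
      rw [pow_succ]; gcongr
    nlinarith
  calc _ ≤ 1 * (5 * |θ| ^ 3) := by gcongr
    _ = _ := one_mul _

/-- value of the first `n` digits -/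
def val (n : ℕ) (X : ℕ → Bool) : ℕ := ∑ k ∈ Finset.range n, (if X k then 2 ^ k else 0)

lemma val_succ (n : ℕ) (X : ℕ → Bool) :
    val (n + 1) X = 2 * val n (shift X) + (if X 0 then 1 else 0) := by
  unfold val shift
  rw [Finset.sum_range_succ', Finset.mul_sum]
  congr 1
  refine Finset.sum_congr rfl fun k _ => ?_
  split_ifs <;> ring

/-- expected quadratic variation -/
noncomputable def qv : ℕ → (ℕ → Bool) → ℝ → ℝ
  | 0, _, _ => 0
  | n + 1, X, p => (if X 0 then 1 - p else p) +
      qv n (shift X) ((p + (if X 0 then 1 else 0)) / 2)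

lemma qv_affine (n : ℕ) (X : ℕ → Bool) :
    ∃ s : ℝ, |s| ≤ 2 ∧ ∀ p, qv n X p = qv n X 0 + p * s := by
  induction n generalizing X with
  | zero => exact ⟨0, by simp, fun p => by simp [qv]⟩
  | succ n ih =>
    obtain ⟨s, hs, h⟩ := ih (shift X)
    rw [abs_le] at hs
    cases hX : X 0
    · refine ⟨1 + s / 2, by rw [abs_le]; constructor <;> linarith, fun p => ?_⟩
      simp only [qv, hX]
      rw [h ((p + _) / 2), h ((0 + _) / 2)]
      simp; ring
    · refine ⟨-1 + s / 2, by rw [abs_le]; constructor <;> linarith, fun p => ?_⟩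
      simp only [qv, hX]
      rw [h ((p + _) / 2), h ((0 + _) / 2)]
      simp; ring

lemma qv_nonneg (n : ℕ) (X : ℕ → Bool) (p : ℝ) (h0 : 0 ≤ p) (h1 : p ≤ 1) : 0 ≤ qv n X p := by
  induction n generalizing X p with
  | zero => simp [qv]
  | succ n ih =>
    rw [qv]
    apply add_nonneg
    · split_ifs <;> linarith
    · apply ih <;> split_ifs <;> linarith

lemma main_est (θ : ℝ) (hθ : |θ| ≤ 1 / 2) (φ : ℕ → ℂ) (f0 : φ 0 = 1) (f1 : ‖φ 1 - 1‖ ≤ θ ^ 2)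
    (fe : ∀ a, φ (2 * a) = φ a)
    (fo : ∀ a, φ (2 * a + 1) = (Complex.exp (θ * Complex.I) * φ a +
      Complex.exp (-(θ * Complex.I)) * φ (a + 1)) / 2) (n : ℕ) (X : ℕ → Bool) :
    ‖φ (val n X) - (Real.exp (-(θ ^ 2 * qv n X 0 / 2)) : ℂ)‖ ≤ n * (5 * |θ| ^ 3) + θ ^ 2 ∧
    ‖φ (val n X + 1) - (Real.exp (-(θ ^ 2 * qv n X 1 / 2)) : ℂ)‖ ≤ n * (5 * |θ| ^ 3) + θ ^ 2 := by
  induction n generalizing X with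
  | zero => simp [val, qv, f0, f1, sq_nonneg]
  | succ n ih =>
    obtain ⟨i0, i1⟩ := ih (shift X)
    set B := (n : ℝ) * (5 * |θ| ^ 3) + θ ^ 2 with hB
    have hB' : ((n + 1 : ℕ) : ℝ) * (5 * |θ| ^ 3) + θ ^ 2 = B + 5 * |θ| ^ 3 := by
      rw [hB]; push_cast; ring
    have hp : 0 ≤ 5 * |θ| ^ 3 := by positivity
    rw [hB', val_succ]
    set v := val n (shift X)
    obtain ⟨s, hs, ha⟩ := qv_affine n (shift X)
    set Q0 := qv n (shift X) 0 with hQ0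
    set Q1 := qv n (shift X) 1 with hQ1
    have hQ01 : Q1 = Q0 + s := by rw [hQ1, ha 1]; ring
    have hhalf : qv n (shift X) (1 / 2) = (Q0 + Q1) / 2 := by rw [ha, hQ01]; ring
    have hloc := local_est θ Q0 Q1 hθ (qv_nonneg _ _ _ le_rfl zero_le_one)
      (qv_nonneg _ _ _ zero_le_one le_rfl) (by rw [hQ01]; simpa using hs)
    have hodd : ‖φ (2 * v + 1) - (Real.exp (-(θ ^ 2 * (1 + (Q0 + Q1) / 2) / 2)) : ℂ)‖ ≤
        B + 5 * |θ| ^ 3 := by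
      rw [fo]
      have nE : ‖Complex.exp (θ * Complex.I)‖ = 1 := Complex.norm_exp_ofReal_mul_I θ
      have nE' : ‖Complex.exp (-(θ * Complex.I))‖ = 1 := by
        rw [show -((θ : ℂ) * Complex.I) = ((-θ : ℝ) : ℂ) * Complex.I by push_cast; ring,
          Complex.norm_exp_ofReal_mul_I]
      set E := Complex.exp (θ * Complex.I)
      set E' := Complex.exp (-(θ * Complex.I))
      set r0 : ℂ := (Real.exp (-(θ ^ 2 * Q0 / 2)) : ℂ)
      set r1 : ℂ := (Real.exp (-(θ ^ 2 * Q1 / 2)) : ℂ)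
      set r : ℂ := (Real.exp (-(θ ^ 2 * (1 + (Q0 + Q1) / 2) / 2)) : ℂ)
      have : (E * φ v + E' * φ (v + 1)) / 2 - r =
          (E * (φ v - r0) / 2 + E' * (φ (v + 1) - r1) / 2) + ((E * r0 + E' * r1) / 2 - r) := by
        ring
      rw [this]
      refine (norm_add_le _ _).trans (add_le_add ((norm_add_le _ _).trans ?_) hloc)
      rw [norm_div, norm_mul, norm_div, norm_mul, nE, nE', Complex.norm_ofNat]
      linarith
    cases hX : X 0
    · simp only [qv, hX]
      constructor
      · simp only [Bool.false_eq_true, if_false, add_zero, zero_div, zero_add, fe]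
        exact i0.trans (by linarith)
      · simp only [Bool.false_eq_true, if_false, add_zero, hhalf]
        exact hodd
    · simp only [qv, hX]
      constructor
      · simp only [if_true, zero_add, sub_zero, hhalf]
        exact hodd
      · simp only [if_true, sub_self, zero_add]
        rw [show 2 * v + 1 + 1 = 2 * (v + 1) by ring, fe,
          show ((1 : ℝ) + 1) / 2 = 1 by norm_num]
        exact i1.trans (by linarith)

/-- binary value -/
noncomputable def bval (X : ℕ → Bool) : ℝ := ∑' i : ℕ, (if X i then (1 : ℝ) else 0) / 2 ^ (i + 1)

lemma hs_geom : HasSum (fun i : ℕ => (1 : ℝ) / 2 ^ (i + 1)) 1 := by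
  have := hasSum_geometric_two' 1
  refine this.congr_fun fun i => ?_
  rw [pow_succ]; field_simp

lemma bval_summable (X : ℕ → Bool) :
    Summable (fun i : ℕ => (if X i then (1 : ℝ) else 0) / 2 ^ (i + 1)) := by
  refine Summable.of_nonneg_of_le (fun i => ?_) (fun i => ?_) hs_geom.summable
  · split_ifs <;> positivity
  · gcongr; split_ifs <;> norm_num

lemma bval_nonneg (X : ℕ → Bool) : 0 ≤ bval X :=
  tsum_nonneg fun i => by split_ifs <;> positivity

lemma bval_le_one (X : ℕ → Bool) : bval X ≤ 1 := by
  rw [← hs_geom.tsum_eq]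
  refine (bval_summable X).tsum_le_tsum (fun i => ?_) hs_geom.summable
  gcongr; split_ifs <;> norm_num

lemma bval_step (X : ℕ → Bool) :
    bval X = ((if X 0 then 1 else 0) + bval (shift X)) / 2 := by
  unfold bval
  rw [(bval_summable X).tsum_eq_zero_add, add_div, ← tsum_div_const]
  congr 1
  · simp
  · refine tsum_congr fun i => ?_
    rw [pow_succ _ (i + 1), shift, div_div]

/-- the observable -/
noncomputable def obs (X : ℕ → Bool) : ℝ :=
  if X 0 then 1 - bval (shift X) else bval (shift X)

lemma obs_abs (X : ℕ → Bool) : |obs X| ≤ 1 := by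
  have h0 := bval_nonneg (shift X)
  have h1 := bval_le_one (shift X)
  unfold obs
  rw [abs_le]
  split_ifs <;> constructor <;> linarith

lemma qv_birk (n : ℕ) (X : ℕ → Bool) (p : ℝ) (h0 : 0 ≤ p) (h1 : p ≤ 1) :
    ∃ r : ℝ, 0 ≤ r ∧ r ≤ 2 ∧ qv n X p - birkhoffSum shift obs n X =
      2 * (p * (1 - bval X) + (1 - p) * bval X) - r := by
  induction n generalizing X p with
  | zero =>
    have b0 := bval_nonneg X
    have b1 := bval_le_one X
    refine ⟨2 * (p * (1 - bval X) + (1 - p) * bval X), ?_, ?_, by simp [qv]⟩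
    · have : 0 ≤ p * (1 - bval X) := mul_nonneg h0 (by linarith)
      have : 0 ≤ (1 - p) * bval X := mul_nonneg (by linarith) b0
      linarith
    · nlinarith [mul_nonneg h0 b0, mul_nonneg (sub_nonneg.2 h1) (sub_nonneg.2 b1)]
  | succ n ih =>
    obtain ⟨r, hr0, hr2, hr⟩ := ih (shift X) ((p + (if X 0 then 1 else 0)) / 2)
      (by split_ifs <;> linarith) (by split_ifs <;> linarith)
    refine ⟨r, hr0, hr2, ?_⟩
    rw [qv, birkhoffSum_succ', bval_step X, obs]
    have : qv n (shift X) ((p + if X 0 = true then 1 else 0) / 2) =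
      birkhoffSum shift obs n (shift X) + (2 * ((p + if X 0 = true then 1 else 0) / 2 * (1 - bval (shift X)) +
      (1 - (p + if X 0 = true then 1 else 0) / 2) * bval (shift X)) - r) := by linarith
    rw [this]
    split_ifs <;> ring

lemma obs_tsum (X : ℕ → Bool) :
    obs X = ∑' i : ℕ, Set.indicator {X : ℕ → Bool | X 0 ≠ X (i + 1)}
      (fun _ => (1 : ℝ) / 2 ^ (i + 1)) X := by
  unfold obs
  cases hX : X 0
  · simp only [Bool.false_eq_true, if_false, bval]
    refine tsum_congr fun i => ?_
    cases h : X (i + 1) <;> simp [Set.indicator, hX, h, shift]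
  · simp only [if_true, bval]
    have e := hs_geom.summable.tsum_sub (bval_summable (shift X))
    rw [hs_geom.tsum_eq] at e
    rw [← e]
    refine tsum_congr fun i => ?_
    cases h : X (i + 1) <;> simp [Set.indicator, hX, h, shift]

lemma meas_ne (i : ℕ) : MeasurableSet {X : ℕ → Bool | X 0 ≠ X (i + 1)} :=
  (measurableSet_eq_fun (measurable_pi_apply 0) (measurable_pi_apply (i + 1))).compl

lemma shift_meas : Measurable shift :=
  measurable_pi_lambda _ fun n => measurable_pi_apply (n + 1)

lemma bval_meas : Measurable bval := by
  refine measurable_of_tendsto_metrizable (f := fun n X => ∑ i ∈ Finset.range n,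
    (if X i then (1 : ℝ) else 0) / 2 ^ (i + 1)) (fun n => ?_) ?_
  · refine Finset.measurable_sum _ fun i _ => Measurable.div_const ?_ _
    exact (measurable_of_finite (fun b : Bool => if b then (1 : ℝ) else 0)).comp
      (measurable_pi_apply i)
  · rw [tendsto_pi_nhds]
    exact fun X => (bval_summable X).hasSum.tendsto_sum_nat

lemma meas_zero : MeasurableSet {X : ℕ → Bool | X 0 = true} :=
  measurableSet_eq_fun (measurable_pi_apply 0) measurable_const

lemma obs_meas : Measurable obs := by
  have h := bval_meas.comp shift_meas
  exact Measurable.ite meas_zero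
    (measurable_const.sub h) h

section meas
variable (ν : Measure (ℕ → Bool)) [IsProbabilityMeasure ν]

lemma V_summable : Summable
    (fun i : ℕ => (ν {X : ℕ → Bool | X 0 ≠ X (i + 1)}).toReal / 2 ^ (i + 1)) := by
  refine Summable.of_nonneg_of_le (fun i => by positivity) (fun i => ?_) hs_geom.summable
  gcongr
  exact measureReal_le_one

lemma obs_integral : ∫ X, obs X ∂ν =
    ∑' i : ℕ, (ν {X : ℕ → Bool | X 0 ≠ X (i + 1)}).toReal / 2 ^ (i + 1) := by
  simp_rw [obs_tsum]
  have hi : ∀ i : ℕ, ∫ X, Set.indicator {X : ℕ → Bool | X 0 ≠ X (i + 1)}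
      (fun _ => (1 : ℝ) / 2 ^ (i + 1)) X ∂ν =
      (ν {X : ℕ → Bool | X 0 ≠ X (i + 1)}).toReal / 2 ^ (i + 1) := by
    intro i
    rw [integral_indicator_const _ (meas_ne i), smul_eq_mul, Measure.real, mul_one_div]
  rw [← integral_tsum_of_summable_integral_norm]
  · exact tsum_congr hi
  · exact fun i => (integrable_const _).indicator (meas_ne i)
  · refine (V_summable ν).congr fun i => ?_
    rw [← hi i]
    refine integral_congr_ae (ae_of_all _ fun X => ?_)
    refine (Real.norm_of_nonneg ?_).symm
    exact Set.indicator_nonneg (fun _ _ => by positivity) _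

lemma eq_dirac_of_ae (c : ℕ → Bool) (h : ∀ᵐ X ∂ν, X = c) : ν = Measure.dirac c := by
  have h1 : ν.map id = ν.map (fun _ => c) := Measure.map_congr h
  rwa [Measure.map_id, Measure.map_const, measure_univ, one_smul] at h1

lemma V_pos (herg : Ergodic shift ν)
    (h0 : ν ≠ Measure.dirac (fun _ => false))
    (h1 : ν ≠ Measure.dirac (fun _ => true)) :
    0 < ∑' i : ℕ, (ν {X : ℕ → Bool | X 0 ≠ X (i + 1)}).toReal / 2 ^ (i + 1) := by
  by_contra hneg
  have hz : ∀ i : ℕ, ν {X : ℕ → Bool | X 0 ≠ X (i + 1)} = 0 := by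
    intro i
    by_contra hi
    apply hneg
    refine (V_summable ν).tsum_pos (fun i => by positivity) i ?_
    have := ENNReal.toReal_pos hi (measure_ne_top ν _)
    positivity
  have hae : ∀ᵐ X ∂ν, ∀ i : ℕ, X 0 = X (i + 1) := by
    rw [ae_all_iff]
    intro i
    rw [ae_iff]
    exact hz i
  have hm : MeasurableSet {X : ℕ → Bool | X 0 = true} := meas_zero
  have hs : shift ⁻¹' {X : ℕ → Bool | X 0 = true} =ᵐ[ν] {X : ℕ → Bool | X 0 = true} := by
    rw [eventuallyEq_set]
    filter_upwards [hae] with X hX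
    simp only [Set.mem_preimage, Set.mem_ofPred_eq, shift]
    rw [hX 0]
  rcases herg.quasiErgodic.ae_mem_or_ae_notMem₀ hm.nullMeasurableSet hs with h | h
  · apply h1
    apply eq_dirac_of_ae
    filter_upwards [h, hae] with X hX hc
    funext n
    cases n with
    | zero => exact hX
    | succ n => rw [← hc n, hX]
  · apply h0
    apply eq_dirac_of_ae
    filter_upwards [h, hae] with X hX hc
    simp only [Bool.not_eq_true] at hX
    funext n
    cases n with
    | zero => exact hX
    | succ n => rw [← hc n, hX]

end meas

/-- the correlation measure as a `PMF` -/
noncomputable def corr {μ : ℕ → ℤ → ℝ} (hdens : ∀ a d, hasDensity a d (μ a d)) (a : ℕ) : PMF ℤ :=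
  ⟨fun d => ENNReal.ofReal (μ a d), by
    have h := ENNReal.ofReal_tsum_of_nonneg (mu_nonneg hdens a) (mu_summable hdens a)
    rw [(mu_hasSum hdens a).tsum_eq, ENNReal.ofReal_one] at h
    rw [h]
    exact ENNReal.summable.hasSum⟩

lemma corr_integral {μ : ℕ → ℤ → ℝ} (hdens : ∀ a d, hasDensity a d (μ a d)) (a : ℕ)
    {E : Type*} [NormedAddCommGroup E] [NormedSpace ℝ E] [CompleteSpace E]
    (g : ℤ → E) (C : ℝ) (hC : ∀ d, ‖g d‖ ≤ C) :
    ∫ d, g d ∂(corr hdens a).toMeasure = ∑' d, μ a d • g d := by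
  rw [PMF.integral_eq_tsum]
  · refine tsum_congr fun d => ?_
    congr 1
    exact ENNReal.toReal_ofReal (mu_nonneg hdens a d)
  · exact Integrable.of_bound (StronglyMeasurable.of_discrete (f := g)).aestronglyMeasurable C (ae_of_all _ hC)

/-- rescaled measure -/
noncomputable def resc {μ : ℕ → ℤ → ℝ} (hdens : ∀ a d, hasDensity a d (μ a d)) (a : ℕ) (c : ℝ) :
    ProbabilityMeasure ℝ :=
  ⟨(corr hdens a).toMeasure.map (fun d : ℤ => (d : ℝ) / c),
    Measure.isProbabilityMeasure_map (measurable_of_countable _).aemeasurable⟩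

lemma resc_integral {μ : ℕ → ℤ → ℝ} (hdens : ∀ a d, hasDensity a d (μ a d)) (a : ℕ) (c : ℝ)
    {E : Type*} [NormedAddCommGroup E] [NormedSpace ℝ E] [CompleteSpace E]
    (g : ℝ → E) (hg : Continuous g) (C : ℝ) (hC : ∀ d, ‖g d‖ ≤ C)  :
    ∫ x, g x ∂(resc hdens a c : Measure ℝ) = ∑' d : ℤ, μ a d • g ((d : ℝ) / c) := by
  rw [← corr_integral hdens a (fun d : ℤ => g ((d : ℝ) / c)) C (fun d => hC _)]
  exact integral_map (measurable_of_countable _).aemeasurable hg.aestronglyMeasurable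

lemma resc_charFun {μ : ℕ → ℤ → ℝ} (hdens : ∀ a d, hasDensity a d (μ a d)) (a : ℕ) (c t : ℝ) :
    charFun (resc hdens a c : Measure ℝ) t = phi μ (t / c) a := by
  rw [charFun_apply_real, resc_integral hdens a c _ (by fun_prop) 1, phi]
  · refine tsum_congr fun d => ?_
    rw [Complex.real_smul, mul_comm]
    congr 3
    push_cast
    ring
  · intro x
    rw [← Complex.ofReal_mul, Complex.norm_exp_ofReal_mul_I]

lemma char_lim {μ : ℕ → ℤ → ℝ} (hdens : ∀ a d, hasDensity a d (μ a d)) (V : ℝ) (hV : 0 < V)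
    (X : ℕ → Bool)
    (hX : Tendsto (fun n : ℕ => birkhoffSum shift obs n X / n) atTop (nhds V)) (t : ℝ) :
    Tendsto (fun n : ℕ => phi μ (t / Real.sqrt (V * n)) (aX X n)) atTop
      (nhds (Real.exp (-(t ^ 2 / 2)) : ℂ)) := by
  -- asymptotics of the quadratic variation
  have hq : Tendsto (fun n : ℕ => qv n X 0 / n) atTop (nhds V) := by
    have h1 : Tendsto (fun n : ℕ => (qv n X 0 - birkhoffSum shift obs n X) / n) atTop (nhds 0) := by
      refine squeeze_zero_norm (a := fun n : ℕ => (2 : ℝ) / n) (fun n => ?_)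
        (tendsto_const_div_atTop_nhds_zero_nat 2)
      obtain ⟨r, hr0, hr2, hr⟩ := qv_birk n X 0 le_rfl zero_le_one
      rw [hr, norm_div, Real.norm_natCast]
      gcongr
      have b0 := bval_nonneg X
      have b1 := bval_le_one X
      rw [Real.norm_eq_abs, abs_le]
      constructor <;> linarith
    have h2 := h1.add hX
    rw [zero_add] at h2
    refine h2.congr fun n => ?_
    ring
  have hr : Tendsto (fun n : ℕ => ((n + 1 : ℕ) : ℝ) / n) atTop (nhds 1) := by
    have h1 : Tendsto (fun n : ℕ => 1 + (1 : ℝ) / n) atTop (nhds (1 + 0)) :=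
      tendsto_const_nhds.add (tendsto_const_div_atTop_nhds_zero_nat 1)
    rw [add_zero] at h1
    refine h1.congr' ?_
    filter_upwards [eventually_gt_atTop 0] with n hn
    have : (n : ℝ) ≠ 0 := by positivity
    push_cast
    field_simp
  have hq1 : Tendsto (fun n : ℕ => qv (n + 1) X 0 / n) atTop (nhds V) := by
    have h1 := ((tendsto_add_atTop_iff_nat 1).2 hq).mul hr
    rw [mul_one] at h1
    refine h1.congr fun n => ?_
    have : ((n + 1 : ℕ) : ℝ) ≠ 0 := by positivity
    field_simp
  have hθ : Tendsto (fun n : ℕ => t / Real.sqrt (V * n)) atTop (nhds 0) := by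
    refine Tendsto.const_div_atTop ?_ t
    exact Real.tendsto_sqrt_atTop.comp (tendsto_natCast_atTop_atTop.const_mul_atTop hV)
  have hsq : ∀ n : ℕ, (t / Real.sqrt (V * n)) ^ 2 = t ^ 2 / V / n := by
    intro n
    rw [div_pow, Real.sq_sqrt (by positivity), div_div]
  have hmain : Tendsto (fun n : ℕ =>
      (Real.exp (-((t / Real.sqrt (V * n)) ^ 2 * qv (n + 1) X 0 / 2)) : ℂ)) atTop
      (nhds (Real.exp (-(t ^ 2 / 2)) : ℂ)) := by
    refine (Complex.continuous_ofReal.tendsto _).comp ((Real.continuous_exp.tendsto _).comp ?_)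
    have h1 := ((hq1.const_mul (t ^ 2 / V)).div_const 2).neg
    have e : t ^ 2 / V * V / 2 = t ^ 2 / 2 := by field_simp
    rw [e] at h1
    refine h1.congr fun n => ?_
    rw [hsq]
    ring
  have herr : Tendsto (fun n : ℕ => ((n + 1 : ℕ) : ℝ) * (5 * |t / Real.sqrt (V * n)| ^ 3) +
      (t / Real.sqrt (V * n)) ^ 2) atTop (nhds 0) := by
    have h1 := ((hr.const_mul (5 * (t ^ 2 / V))).mul hθ.abs).add (hθ.pow 2)
    simp only [abs_zero, mul_zero, ne_eq, OfNat.ofNat_ne_zero, not_false_eq_true, zero_pow,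
      add_zero] at h1
    refine h1.congr fun n => ?_
    congr 1
    rw [pow_succ |t / Real.sqrt (V * n)| 2, sq_abs, hsq]
    ring
  have hdiff : Tendsto (fun n : ℕ => phi μ (t / Real.sqrt (V * n)) (aX X n) -
      (Real.exp (-((t / Real.sqrt (V * n)) ^ 2 * qv (n + 1) X 0 / 2)) : ℂ)) atTop (nhds 0) := by
    refine squeeze_zero_norm' ?_ herr
    have hsmall : ∀ᶠ n : ℕ in atTop, |t / Real.sqrt (V * n)| < 1 / 2 := by
      have := hθ.abs
      rw [abs_zero] at this
      exact this.eventually_lt_const (by norm_num)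
    filter_upwards [hsmall] with n hn
    exact (main_est _ hn.le (phi μ (t / Real.sqrt (V * n))) (phi_zero hdens _) (phi_one hdens _)
      (phi_even hdens _) (phi_odd hdens _) (n + 1) X).1
  have := hdiff.add hmain
  simpa using this

/-- Central limit theorem for the correlation measures `μ_{a_X(n)}` along a generic
point of an ergodic shift-invariant measure: the measures rescaled by `√(V_ν n)`
converge weakly to `N(0,1)`. Weak convergence is expressed through integrals of
bounded continuous functions; `∫ f dμ̃_{X,n} = ∑_d f(d/√(V_ν n)) μ_{a_X(n)}(d)`. -/
theorem clt_correlation_measures (ν : Measure (ℕ → Bool)) [IsProbabilityMeasure ν]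
    (herg : Ergodic shift ν)
    (h0 : ν ≠ Measure.dirac (fun _ => false))
    (h1 : ν ≠ Measure.dirac (fun _ => true))
    (μ : ℕ → ℤ → ℝ) (hdens : ∀ a d, hasDensity a d (μ a d))
    (Vν : ℝ) (hV : Vν = ∑' i : ℕ, (ν {X | X 0 ≠ X (i + 1)}).toReal / 2 ^ (i + 1)) :
    ∀ᵐ X ∂ν, ∀ f : BoundedContinuousFunction ℝ ℝ,
      Tendsto (fun n : ℕ =>
          ∑' d : ℤ, f ((d : ℝ) / Real.sqrt (Vν * n)) * μ (aX X n) d)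
        atTop (nhds (∫ t : ℝ, f t * stdGaussian t)) := by
  have hVpos : 0 < Vν := hV ▸ V_pos ν herg h0 h1
  have hint : ∫ X, obs X ∂ν = Vν := by rw [hV, obs_integral]
  filter_upwards [birk ν shift herg obs obs_meas 1 obs_abs] with X hX
  rw [hint] at hX
  let G : ProbabilityMeasure ℝ := ⟨ProbabilityTheory.gaussianReal 0 1, inferInstance⟩
  have hconv : Tendsto (fun n : ℕ => resc hdens (aX X n) (Real.sqrt (Vν * n))) atTop (nhds G) := by
    refine ProbabilityMeasure.tendsto_iff_tendsto_charFun.2 fun t => ?_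
    simp only [resc_charFun]
    have h := char_lim hdens Vν hVpos X hX t
    have e : charFun (G : Measure ℝ) t = (Real.exp (-(t ^ 2 / 2)) : ℂ) := by
      change charFun (ProbabilityTheory.gaussianReal 0 1) t = _
      rw [ProbabilityTheory.charFun_gaussianReal]
      push_cast
      congr 1
      simp
    rw [e]
    exact h
  intro f
  have h := ProbabilityMeasure.tendsto_iff_forall_integral_tendsto.1 hconv f
  have e : ∫ x, f x ∂(G : Measure ℝ) = ∫ t : ℝ, f t * stdGaussian t := by
    change ∫ x, f x ∂(ProbabilityTheory.gaussianReal 0 1) = _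
    rw [ProbabilityTheory.integral_gaussianReal_eq_integral_smul (by norm_num)]
    refine integral_congr_ae (ae_of_all _ fun x => ?_)
    simp only [ProbabilityTheory.gaussianPDFReal, stdGaussian, smul_eq_mul, sub_zero,
      NNReal.coe_one, mul_one]
    ring
  rw [e] at h
  refine h.congr fun n => ?_
  rw [resc_integral hdens _ _ f f.continuous ‖f‖ f.norm_coe_le_norm]
  refine tsum_congr fun d => ?_
  rw [smul_eq_mul, mul_comm]
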